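/- The second derivative of tanh is bounded: for all real x, |(tanh)''(x)| ≤ 4√3/9. -/

import Mathlib

/-!
Write `t = tanh x`. From `tanh' = 1 - tanh ^ 2` it follows that `tanh'' = -2 t (1 - t ^ 2)`.
The bound then comes from the factorization
`4 √3 / 9 - 2 t (1 - t ^ 2) = 2 (t - √3 / 3) ^ 2 (t + 2 √3 / 3)`, whose right-hand side is
nonnegative for `t ≥ -1` because `2 √3 / 3 > 1`; the other sign follows by replacing `t` with `-t`.
-/

lemma hasDerivAt_tanh_one_sub_sq (x : ℝ) :
    HasDerivAt Real.tanh (1 - Real.tanh x ^ 2) x := by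
  have hc : Real.cosh x ≠ 0 := (Real.cosh_pos x).ne'
  have h := (Real.hasDerivAt_sinh x).div (Real.hasDerivAt_cosh x) hc
  have hf : Real.tanh = Real.sinh / Real.cosh := by
    ext y
    exact Real.tanh_eq_sinh_div_cosh y
  have hv : 1 - Real.tanh x ^ 2 = (Real.cosh x * Real.cosh x - Real.sinh x * Real.sinh x)
      / Real.cosh x ^ 2 := by
    rw [Real.tanh_eq_sinh_div_cosh]
    field_simp
  rw [hv, hf]
  exact h

lemma iteratedDeriv_two_tanh (x : ℝ) :
    iteratedDeriv 2 Real.tanh x = -2 * Real.tanh x * (1 - Real.tanh x ^ 2) := by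
  have h1 : deriv Real.tanh = fun y => 1 - Real.tanh y ^ 2 :=
    funext fun y => (hasDerivAt_tanh_one_sub_sq y).deriv
  rw [iteratedDeriv_succ, iteratedDeriv_one, h1]
  have h2 := ((hasDerivAt_tanh_one_sub_sq x).pow 2).const_sub 1
  refine h2.deriv.trans ?_
  push_cast
  ring

lemma two_mul_mul_one_sub_sq_le {t : ℝ} (ht : -1 ≤ t) :
    2 * t * (1 - t ^ 2) ≤ 4 * Real.sqrt 3 / 9 := by
  have hs : Real.sqrt 3 ^ 2 = 3 := Real.sq_sqrt (by norm_num)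
  have hs' : 3 / 2 ≤ Real.sqrt 3 := Real.le_sqrt_of_sq_le (by norm_num)
  have hfac : 4 * Real.sqrt 3 / 9 - 2 * t * (1 - t ^ 2)
      = 2 * (t - Real.sqrt 3 / 3) ^ 2 * (t + 2 * Real.sqrt 3 / 3) := by
    linear_combination (2 * t / 3 - 4 * Real.sqrt 3 / 27) * hs
  have hpos : 0 ≤ 2 * (t - Real.sqrt 3 / 3) ^ 2 * (t + 2 * Real.sqrt 3 / 3) :=
    mul_nonneg (by positivity) (by linarith)
  linarith

/-- The second derivative of tanh is bounded by 4√3/9 in absolute value. -/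
theorem tanh_second_deriv_bound (x : ℝ) :
    |iteratedDeriv 2 Real.tanh x| ≤ 4 * Real.sqrt 3 / 9 := by
  have h1 := two_mul_mul_one_sub_sq_le (Real.neg_one_lt_tanh x).le
  have h2 := two_mul_mul_one_sub_sq_le (neg_le_neg (Real.tanh_lt_one x).le)
  rw [iteratedDeriv_two_tanh, abs_le]
  constructor <;> linarith
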